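/- Let (W₁*,…,W_J*, Z*) be a local minimizer of the sparse GCCA problem: minimize ∑_{j=1}^J ‖W_j‖₁ over W_j ∈ ℝ^{n_j×ℓ} and Z ∈ ℝ^{m×ℓ} subject to A_j W_j + B_j Z = 0 for all j = 1,…,J and ZᵀZ = I_ℓ. Then for each j there exist Lagrange multipliers Λ*_{1,j} ∈ ℝ^{r_j×ℓ} and Λ*_2 ∈ ℝ^{ℓ×ℓ} such that: A_jᵀ Λ*_{1,j} ∈ ∂‖W_j*‖₁ for every j, ∑_{j=1}^J B_jᵀ Λ*_{1,j} + Z* Λ*_2 = 0, A_j W_j* + B_j Z* = 0 for every j, and (Z*)ᵀ Z* = I_ℓ. -/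

import Mathlib

open Matrix Filter Topology

/-- The ℓ1 norm of a real matrix: sum of absolute values of all entries. -/
noncomputable def l1 {α β : Type*} [Fintype α] [Fintype β] (W : Matrix α β ℝ) : ℝ :=
  ∑ i, ∑ j, |W i j|

/-- The Frobenius (trace) inner product of two real matrices. -/
noncomputable def frobInner {α β : Type*} [Fintype α] [Fintype β] (M N : Matrix α β ℝ) : ℝ :=
  ∑ i, ∑ j, M i j * N i j

/-- The squared Frobenius norm of a real matrix. -/
noncomputable def frobSq {α β : Type*} [Fintype α] [Fintype β] (M : Matrix α β ℝ) : ℝ :=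
  ∑ i, ∑ j, (M i j) ^ 2

/-- The subdifferential of a (convex) function on real matrices at a point. -/
def subdiff {α β : Type*} [Fintype α] [Fintype β]
    (f : Matrix α β ℝ → ℝ) (x : Matrix α β ℝ) : Set (Matrix α β ℝ) :=
  {g | ∀ y, f x + frobInner g (y - x) ≤ f y}

/-!
Right multiplication by an `ℓ × ℓ` matrix preserves the linear constraints, so a direction `(V, X)`
tangent to the constraints at `(W*, Z*)` is followed by the feasible curve
`(W* + t V, Z* + t X) (1 + t² Xᵀ X)^(-1/2)`, whose difference quotient `v t` tends to `(V, X)`.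
Local minimality along the curve and convexity of the objective `F` show that `F` does not decrease
from `(W*, Z*)` to `(W*, Z*) + v t`, so in the limit it does not decrease under the full
displacement `(V, X)`. Hence `(W*, Z*)` minimizes `F` over an affine subspace, separating that
subspace from the strict epigraph of `F` yields a subgradient vanishing on the tangent directions,
and such a functional factors through the linearized constraints. The coefficients of the factor
are the multipliers.
-/

section ConvexMinimization

variable {E : Type*} [AddCommGroup E] [Module ℝ E]

lemma eq_zero_of_forall_mem_le_apply {φ : Module.Dual ℝ E} {K : Submodule ℝ E} {c : ℝ}
    (h : ∀ k ∈ K, c ≤ φ k) : ∀ k ∈ K, φ k = 0 := by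
  intro k hk
  by_contra hne
  have := h _ (K.smul_mem ((c - 1) / φ k) hk)
  rw [map_smul, smul_eq_mul, div_mul_cancel₀ _ hne] at this
  linarith

lemma convexOn_sum {ι : Type*} {s : Finset ι} {C : Set E} {f : ι → E → ℝ} (hC : Convex ℝ C)
    (hf : ∀ j ∈ s, ConvexOn ℝ C (f j)) : ConvexOn ℝ C fun x => ∑ j ∈ s, f j x := by
  simpa only [Finset.sum_fn] using
    Finset.sum_induction f (ConvexOn ℝ C) (fun _ _ => ConvexOn.add) (convexOn_const 0 hC) hf

variable [TopologicalSpace E] [IsTopologicalAddGroup E] [ContinuousSMul ℝ E] {f : E → ℝ} {x : E}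

lemma le_add_of_isLocalMinOn_of_tendsto {C : Set E} {d : E} {v : ℝ → E}
    (hf : ConvexOn ℝ Set.univ f) (hcont : Continuous f) (hmin : IsLocalMinOn f C x)
    (hv : Tendsto v (𝓝[>] 0) (𝓝 d)) (hC : ∀ᶠ t in 𝓝[>] (0 : ℝ), x + t • v t ∈ C) :
    f x ≤ f (x + d) := by
  have hpath : Tendsto (fun t : ℝ => x + t • v t) (𝓝[>] 0) (𝓝[C] x) := by
    refine tendsto_nhdsWithin_iff.2 ⟨?_, hC⟩
    simpa using ((tendsto_nhdsWithin_of_tendsto_nhds tendsto_id).smul hv).const_add x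
  have hchord : ∀ᶠ t in 𝓝[>] (0 : ℝ), f x ≤ f (x + v t) := by
    filter_upwards [hpath.eventually hmin, Ioo_mem_nhdsGT one_pos] with t hle ⟨ht0, ht1⟩
    have hconv := hf.2 (Set.mem_univ x) (Set.mem_univ (x + v t)) (sub_nonneg.2 ht1.le) ht0.le
      (sub_add_cancel 1 t)
    have hcomb : (1 - t) • x + t • (x + v t) = x + t • v t := by module
    rw [hcomb, smul_eq_mul, smul_eq_mul] at hconv
    exact le_of_mul_le_mul_left (by linarith) ht0
  exact ge_of_tendsto ((hcont.tendsto _).comp (hv.const_add x)) hchord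

lemma exists_strongDual_forall_add_sub_le (hf : ConvexOn ℝ Set.univ f) (hcont : Continuous f)
    {D : Set E} (hD : Convex ℝ D) {c : ℝ} (hc : ∀ z ∈ D, c ≤ f z) :
    ∃ g : StrongDual ℝ E, ∀ y, ∀ z ∈ D, c + g (y - z) ≤ f y := by
  rcases D.eq_empty_or_nonempty with rfl | ⟨z₀, hz₀⟩
  · simp
  have hopen : IsOpen {p : E × ℝ | p.1 ∈ Set.univ ∧ f p.1 < p.2} := by
    simpa using isOpen_lt (hcont.comp continuous_fst) continuous_snd
  have hdisj : Disjoint {p : E × ℝ | p.1 ∈ Set.univ ∧ f p.1 < p.2} (D ×ˢ {c}) := by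
    rw [Set.disjoint_right]
    rintro ⟨z, _⟩ ⟨hz, rfl⟩ ⟨-, hlt⟩
    exact hlt.not_ge (hc z hz)
  obtain ⟨φ, u, hepi, hflat⟩ := geometric_hahn_banach_open hf.convex_strict_epigraph hopen
    (hD.prod (convex_singleton c)) hdisj
  set L : StrongDual ℝ E := φ.comp (.inl ℝ E ℝ)
  set a : ℝ := φ (0, 1)
  have hφ (y : E) (s : ℝ) : φ (y, s) = L y + s * a := by
    have : (y, s) = (y, 0) + s • ((0, 1) : E × ℝ) := by simp
    rw [this, map_add, map_smul]
    rfl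
  have habove {y : E} {s : ℝ} (hs : f y < s) : L y + s * a < u := hφ y s ▸ hepi (y, s) ⟨trivial, hs⟩
  have hbelow {z : E} (hz : z ∈ D) : u ≤ L z + c * a := hφ z c ▸ hflat (z, c) ⟨hz, rfl⟩
  have ha : a < 0 := by
    have := (habove (lt_add_one (f z₀))).trans_le (hbelow hz₀)
    nlinarith [hc z₀ hz₀]
  have hgraph (y : E) : L y + f y * a ≤ u :=
    ContinuousWithinAt.closure_le (s := Set.Ioi (f y)) (by simp) (f := fun s => L y + s * a)
      (g := fun _ => u) (by fun_prop) (by fun_prop) fun s hs => (habove hs).le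
  refine ⟨(-a)⁻¹ • L, fun y z hz => ?_⟩
  have hquot : (-a)⁻¹ * (L y - L z) ≤ f y - c := by
    rw [inv_mul_le_iff₀ (neg_pos.2 ha)]
    linarith [hgraph y, hbelow hz]
  rw [_root_.smul_apply, map_sub, smul_eq_mul]
  linarith

lemma exists_strongDual_vanishing_subgradient (hf : ConvexOn ℝ Set.univ f) (hcont : Continuous f)
    (K : Submodule ℝ E) (hmin : ∀ k ∈ K, f x ≤ f (x + k)) :
    ∃ g : StrongDual ℝ E, (∀ k ∈ K, g k = 0) ∧ ∀ y, f x + g (y - x) ≤ f y := by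
  obtain ⟨g, hg⟩ := exists_strongDual_forall_add_sub_le hf hcont (K.convex.translate x) (c := f x)
    (Set.forall_mem_image.2 hmin)
  have hgK {y k : E} (hk : k ∈ K) : f x + g (y - (x + k)) ≤ f y :=
    hg y _ (Set.mem_image_of_mem _ hk)
  refine ⟨g, eq_zero_of_forall_mem_le_apply (φ := (g : Module.Dual ℝ E)) (c := 0) fun k hk => ?_,
    fun y => by simpa using hgK (y := y) K.zero_mem⟩
  simpa using hgK (y := x) hk

lemma exists_dual_comp_subgradient {F : Type*} [AddCommGroup F] [Module ℝ F]
    (hf : ConvexOn ℝ Set.univ f) (hcont : Continuous f) (Φ : E →ₗ[ℝ] F)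
    (hmin : ∀ k ∈ LinearMap.ker Φ, f x ≤ f (x + k)) :
    ∃ φ : Module.Dual ℝ F, ∀ y, f x + φ (Φ (y - x)) ≤ f y := by
  obtain ⟨g, hgker, hg⟩ := exists_strongDual_vanishing_subgradient hf hcont _ hmin
  have hmem : (g : Module.Dual ℝ E) ∈ LinearMap.range Φ.dualMap := by
    rw [LinearMap.range_dualMap_eq_dualAnnihilator_ker, Submodule.mem_dualAnnihilator]
    exact hgker
  obtain ⟨φ, hφ⟩ := hmem
  exact ⟨φ, fun y => (congrArg (f x + ·) (LinearMap.congr_fun hφ (y - x))).trans_le (hg y)⟩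

lemma continuous_of_convexOn_univ [T2Space E] [FiniteDimensional ℝ E]
    (hf : ConvexOn ℝ Set.univ f) : Continuous f := by
  have hcomp : ConvexOn ℝ Set.univ (f ∘ toEuclidean.symm) :=
    hf.comp_linearMap (toEuclidean (E := E)).symm.toLinearMap
  simpa [Function.comp_assoc] using hcomp.locallyLipschitz.continuous.comp toEuclidean.continuous

end ConvexMinimization

section InverseSquareRoot

/-- The difference quotient `((1 + t² x)^(-1/2) - 1) / t` of the inverse square root. -/
noncomputable def invSqrtSlope (t x : ℝ) : ℝ := t⁻¹ * ((√(1 + t ^ 2 * x))⁻¹ - 1)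

lemma one_add_mul_invSqrtSlope (t x : ℝ) : 1 + t * invSqrtSlope t x = (√(1 + t ^ 2 * x))⁻¹ := by
  rcases eq_or_ne t 0 with rfl | ht
  · simp
  · rw [invSqrtSlope, mul_inv_cancel_left₀ ht, add_sub_cancel]

lemma abs_invSqrtSlope_le {x : ℝ} (hx : 0 ≤ x) (t : ℝ) : |invSqrtSlope t x| ≤ |t| * x := by
  rcases eq_or_ne t 0 with rfl | ht
  · simp [invSqrtSlope]
  set s := √(1 + t ^ 2 * x)
  have hs_one : 1 ≤ s := Real.one_le_sqrt.2 (le_add_of_nonneg_right (by positivity))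
  have hs_sq : s ^ 2 = 1 + t ^ 2 * x := Real.sq_sqrt (by positivity)
  have hs_inv : |s⁻¹ - 1| ≤ t ^ 2 * x := by
    rw [abs_sub_comm, abs_of_nonneg (sub_nonneg.2 (inv_le_one_of_one_le₀ hs_one))]
    calc 1 - s⁻¹ ≤ s - 1 :=
          (Real.one_sub_inv_le_log_of_pos (by linarith)).trans
            (Real.log_le_sub_one_of_pos (by linarith))
      _ ≤ s ^ 2 - 1 := by nlinarith
      _ = t ^ 2 * x := by rw [hs_sq, add_sub_cancel_left]
  calc |invSqrtSlope t x| = |t|⁻¹ * |s⁻¹ - 1| := by rw [invSqrtSlope, abs_mul, abs_inv]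
    _ ≤ |t|⁻¹ * (t ^ 2 * x) := by gcongr
    _ = |t| * x := by rw [← sq_abs]; field_simp

lemma continuousOn_invSqrtSlope (t : ℝ) : ContinuousOn (invSqrtSlope t) (Set.Ici 0) := by
  refine continuousOn_const.mul ((ContinuousOn.inv₀ (by fun_prop) fun x hx => ?_).sub
    continuousOn_const)
  have : 0 ≤ x := hx
  positivity

variable {A : Type*} [Ring A] [StarRing A] [TopologicalSpace A] [Algebra ℝ A]
  [ContinuousFunctionalCalculus ℝ A IsSelfAdjoint] {a : A}

lemma tendsto_cfc_invSqrtSlope (ha : ∀ x ∈ spectrum ℝ a, 0 ≤ x) :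
    Tendsto (fun t => cfc (invSqrtSlope t) a) (𝓝 0) (𝓝 0) := by
  obtain ⟨M, hM⟩ := (ContinuousFunctionalCalculus.isCompact_spectrum (R := ℝ) a).bddAbove
  rw [← cfc_const_zero ℝ a]
  refine tendsto_cfc_fun ?_ (.of_forall fun t => (continuousOn_invSqrtSlope t).mono ha)
  have hbound : Tendsto (fun t : ℝ => |t| * M) (𝓝 0) (𝓝 0) :=
    (continuous_abs.mul continuous_const).tendsto' 0 0 (by simp)
  refine Metric.tendstoUniformlyOn_iff.2 fun ε hε => ?_
  filter_upwards [hbound.eventually (gt_mem_nhds hε)] with t ht x hx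
  rw [dist_zero_left, Real.norm_eq_abs]
  calc |invSqrtSlope t x| ≤ |t| * x := abs_invSqrtSlope_le (ha x hx) t
    _ ≤ |t| * M := by gcongr; exact hM hx
    _ < ε := ht

lemma one_add_smul_cfc_invSqrtSlope (hsa : IsSelfAdjoint a)
    (ha : ∀ x ∈ spectrum ℝ a, 0 ≤ x) (t : ℝ) :
    1 + t • cfc (invSqrtSlope t) a = cfc (fun x => (√(1 + t ^ 2 * x))⁻¹) a := by
  have hcont := (continuousOn_invSqrtSlope t).mono ha
  simp_rw [← one_add_mul_invSqrtSlope]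
  rw [cfc_const_add .., cfc_const_mul ..]
  simp

lemma one_add_smul_cfc_invSqrtSlope_conj (hsa : IsSelfAdjoint a)
    (ha : ∀ x ∈ spectrum ℝ a, 0 ≤ x) (t : ℝ) :
    (1 + t • cfc (invSqrtSlope t) a) * (1 + t ^ 2 • a) * (1 + t • cfc (invSqrtSlope t) a) = 1 := by
  have hpos : ∀ x ∈ spectrum ℝ a, 0 < 1 + t ^ 2 * x := fun x hx => by
    have := ha x hx
    positivity
  have hcont : ContinuousOn (fun x => (√(1 + t ^ 2 * x))⁻¹) (spectrum ℝ a) :=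
    ContinuousOn.inv₀ (by fun_prop) fun x hx => (Real.sqrt_pos.2 (hpos x hx)).ne'
  have hlin : 1 + t ^ 2 • a = cfc (fun x => 1 + t ^ 2 * x) a := by
    rw [cfc_const_add .., cfc_const_mul_id ..]
    simp
  rw [one_add_smul_cfc_invSqrtSlope hsa ha, hlin, ← cfc_mul .., ← cfc_mul .., ← cfc_one ℝ a]
  refine cfc_congr fun x hx => ?_
  have hs := Real.sqrt_pos.2 (hpos x hx)
  have hsq := Real.sq_sqrt (hpos x hx).le
  simp only [Pi.one_apply]
  field_simp
  exact hsq.symm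

end InverseSquareRoot

section Frobenius

variable {α β γ : Type*} [Fintype α] [Fintype β] [Fintype γ]

lemma frobInner_eq_trace (M N : Matrix α β ℝ) : frobInner M N = (Mᵀ * N).trace := by
  simp only [frobInner, trace, diag, mul_apply, transpose_apply]
  exact Finset.sum_comm

lemma frobInner_add_left (M M' N : Matrix α β ℝ) :
    frobInner (M + M') N = frobInner M N + frobInner M' N := by
  simp [frobInner_eq_trace, Matrix.add_mul]

lemma frobInner_add_right (M N N' : Matrix α β ℝ) :
    frobInner M (N + N') = frobInner M N + frobInner M N' := by
  simp [frobInner_eq_trace, Matrix.mul_add]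

lemma frobInner_zero_right (M : Matrix α β ℝ) : frobInner M 0 = 0 := by
  simp [frobInner_eq_trace]

lemma frobInner_sum_left {ι : Type*} (s : Finset ι) (M : ι → Matrix α β ℝ) (N : Matrix α β ℝ) :
    frobInner (∑ j ∈ s, M j) N = ∑ j ∈ s, frobInner (M j) N := by
  simp [frobInner_eq_trace, transpose_sum, Matrix.sum_mul, trace_sum]

lemma frobInner_mul_right (L : Matrix α γ ℝ) (A : Matrix α β ℝ) (X : Matrix β γ ℝ) :
    frobInner L (A * X) = frobInner (Aᵀ * L) X := by
  simp [frobInner_eq_trace, Matrix.mul_assoc]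

lemma frobInner_transpose_right (M : Matrix α β ℝ) (N : Matrix β α ℝ) :
    frobInner M Nᵀ = frobInner Mᵀ N :=
  Finset.sum_comm

lemma eq_zero_of_frobInner_self_nonpos {M : Matrix α β ℝ} (h : frobInner M M ≤ 0) : M = 0 := by
  have hsq : (Mᴴ * M).trace = frobInner M M := by simp [frobInner_eq_trace]
  refine trace_conjTranspose_mul_self_eq_zero_iff.1 (hsq.trans (h.antisymm ?_))
  exact hsq ▸ (posSemidef_conjTranspose_mul_self M).trace_nonneg

lemma exists_eq_frobInner (φ : Module.Dual ℝ (Matrix α β ℝ)) : ∃ L, ∀ X, φ X = frobInner L X := by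
  classical
  refine ⟨fun i j => φ (Matrix.single i j 1), fun X => ?_⟩
  conv_lhs => rw [matrix_eq_sum_single X]
  simp only [map_sum, frobInner]
  refine Finset.sum_congr rfl fun i _ => Finset.sum_congr rfl fun j _ => ?_
  have : Matrix.single i j (X i j) = X i j • Matrix.single i j (1:ℝ) := by simp
  rw [this, map_smul, smul_eq_mul, mul_comm]

lemma exists_eq_sum_frobInner_add {ι : Type*} [Fintype ι] {ρ : ι → Type*} [∀ j, Fintype (ρ j)]
    (φ : Module.Dual ℝ ((∀ j, Matrix (ρ j) γ ℝ) × Matrix α β ℝ)) :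
    ∃ (Λ : ∀ j, Matrix (ρ j) γ ℝ) (S : Matrix α β ℝ),
      ∀ p, φ p = ∑ j, frobInner (Λ j) (p.1 j) + frobInner S p.2 := by
  classical
  choose Λ hΛ using fun j => exists_eq_frobInner
    (φ ∘ₗ LinearMap.inl ℝ _ _ ∘ₗ LinearMap.single ℝ (fun j => Matrix (ρ j) γ ℝ) j)
  obtain ⟨S, hS⟩ := exists_eq_frobInner (φ ∘ₗ LinearMap.inr ℝ _ _)
  refine ⟨Λ, S, fun ⟨Y, X⟩ => ?_⟩
  have hsplit : (Y, X) = ∑ j, LinearMap.inl ℝ _ _ (LinearMap.single ℝ _ j (Y j)) +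
      LinearMap.inr ℝ (∀ j, Matrix (ρ j) γ ℝ) (Matrix α β ℝ) X := by
    rw [← map_sum]
    simp [Finset.univ_sum_single]
  calc φ (Y, X) = _ := congrArg φ hsplit
    _ = ∑ j, frobInner (Λ j) (Y j) + frobInner S X := by simp [← hΛ, ← hS, map_add, map_sum]

lemma mem_subdiff_of_sum_le {ι : Type*} [Fintype ι] {ν : ι → Type*} [∀ j, Fintype (ν j)]
    {f : ∀ j, Matrix (ν j) γ ℝ → ℝ} {W G : ∀ j, Matrix (ν j) γ ℝ}
    (h : ∀ V : ∀ j, Matrix (ν j) γ ℝ,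
      ∑ j, f j (W j) + ∑ j, frobInner (G j) (V j - W j) ≤ ∑ j, f j (V j)) (j : ι) :
    G j ∈ subdiff (f j) (W j) := by
  classical
  intro Y
  set V := Function.update W j Y
  have hsum : 0 ≤ ∑ k, (f k (V k) - f k (W k) - frobInner (G k) (V k - W k)) := by
    simp only [Finset.sum_sub_distrib]
    linarith [h V]
  rw [Finset.sum_eq_single_of_mem j (Finset.mem_univ j) fun k _ hk => by
    simp [V, Function.update_of_ne hk, frobInner_zero_right]] at hsum
  simp only [V, Function.update_self] at hsum
  linarith

lemma continuous_frobSq : Continuous (frobSq : Matrix α β ℝ → ℝ) := by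
  unfold frobSq
  fun_prop

lemma convexOn_l1 : ConvexOn ℝ Set.univ (l1 : Matrix α β ℝ → ℝ) := by
  refine ⟨convex_univ, fun W _ V _ a b ha hb _ => ?_⟩
  simp only [l1, smul_eq_mul, Finset.mul_sum, ← Finset.sum_add_distrib]
  gcongr with i _ j _
  calc |a * W i j + b * V i j| ≤ |a * W i j| + |b * V i j| := abs_add_le _ _
    _ = a * |W i j| + b * |V i j| := by rw [abs_mul, abs_mul, abs_of_nonneg ha, abs_of_nonneg hb]

end Frobenius

section GCCA

variable {ι κ μ : Type*} {ν ρ : ι → Type*} [Fintype μ] [∀ j, Fintype (ν j)]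

/-- The feasible set of the GCCA problem, as a set of pairs `(W, Z)`. -/
def gccaFeasible [DecidableEq κ] (A : ∀ j, Matrix (ρ j) (ν j) ℝ) (B : ∀ j, Matrix (ρ j) μ ℝ) :
    Set ((∀ j, Matrix (ν j) κ ℝ) × Matrix μ κ ℝ) :=
  {p | (∀ j, A j * p.1 j + B j * p.2 = 0) ∧ p.2ᵀ * p.2 = 1}

/-- The derivative of the constraint map `(W, Z) ↦ (A W + B Z, Zᵀ Z)` of the GCCA problem at a point
with second component `Z`. -/
def gccaLinearization [Fintype κ] (A : ∀ j, Matrix (ρ j) (ν j) ℝ) (B : ∀ j, Matrix (ρ j) μ ℝ)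
    (Z : Matrix μ κ ℝ) :
    ((∀ j, Matrix (ν j) κ ℝ) × Matrix μ κ ℝ) →ₗ[ℝ] (∀ j, Matrix (ρ j) κ ℝ) × Matrix κ κ ℝ where
  toFun p := (fun j => A j * p.1 j + B j * p.2, Zᵀ * p.2 + p.2ᵀ * Z)
  map_add' p q := by
    ext <;> simp [Matrix.mul_add, Matrix.add_mul] <;> ring
  map_smul' c p := by
    ext <;> simp [mul_add]

lemma add_smul_retraction [Fintype κ] [DecidableEq κ] {α : Type*} (X D : Matrix α κ ℝ)
    (E : Matrix κ κ ℝ) (t : ℝ) :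
    X + t • (D + (X + t • D) * E) = (X + t • D) * (1 + t • E) := by
  rw [Matrix.mul_add, Matrix.mul_one, Matrix.mul_smul, smul_add, add_assoc]

lemma tendsto_add_add_smul_mul [Fintype κ] {α : Type*} (X D : Matrix α κ ℝ)
    {E : ℝ → Matrix κ κ ℝ} (hE : Tendsto E (𝓝[>] 0) (𝓝 0)) :
    Tendsto (fun t => D + (X + t • D) * E t) (𝓝[>] 0) (𝓝 D) := by
  have hcont : Continuous fun q : ℝ × Matrix κ κ ℝ => D + (X + q.1 • D) * q.2 :=
    continuous_const.add
      ((continuous_const.add (continuous_fst.smul continuous_const)).matrix_mul continuous_snd)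
  have hid : Tendsto (fun t : ℝ => t) (𝓝[>] 0) (𝓝 0) :=
    tendsto_nhdsWithin_of_tendsto_nhds tendsto_id
  simpa [Function.comp_def] using (hcont.tendsto _).comp (hid.prodMk_nhds hE)

lemma transpose_mul_self_add_smul [DecidableEq κ] {Z D : Matrix μ κ ℝ} (hZ : Zᵀ * Z = 1)
    (hD : Zᵀ * D + Dᵀ * Z = 0) (t : ℝ) :
    (Z + t • D)ᵀ * (Z + t • D) = 1 + t ^ 2 • (Dᵀ * D) := by
  have hexp : (Z + t • D)ᵀ * (Z + t • D) =
      Zᵀ * Z + t • (Zᵀ * D + Dᵀ * Z) + t ^ 2 • (Dᵀ * D) := by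
    simp only [transpose_add, transpose_smul, Matrix.mul_add, Matrix.add_mul, Matrix.mul_smul,
      Matrix.smul_mul]
    module
  rw [hexp, hZ, hD, smul_zero, add_zero]

lemma exists_tendsto_feasible_of_mem_ker [Fintype κ] [DecidableEq κ]
    {A : ∀ j, Matrix (ρ j) (ν j) ℝ} {B : ∀ j, Matrix (ρ j) μ ℝ}
    {p d : (∀ j, Matrix (ν j) κ ℝ) × Matrix μ κ ℝ} (hp : p ∈ gccaFeasible A B)
    (hd : d ∈ LinearMap.ker (gccaLinearization A B p.2)) :
    ∃ v : ℝ → (∀ j, Matrix (ν j) κ ℝ) × Matrix μ κ ℝ,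
      Tendsto v (𝓝[>] 0) (𝓝 d) ∧ ∀ t, p + t • v t ∈ gccaFeasible A B := by
  obtain ⟨W, Z⟩ := p
  obtain ⟨V, X⟩ := d
  obtain ⟨hW, hZ⟩ := hp
  obtain ⟨hV, hX⟩ := Prod.mk.inj (LinearMap.mem_ker.1 hd)
  dsimp only at hW hZ hV hX
  obtain ⟨hsa, hspec⟩ : IsSelfAdjoint (Xᵀ * X) ∧ spectrum ℝ (Xᵀ * X) ⊆ Set.Ici 0 :=
    posSemidef_iff_isHermitian_and_spectrum_nonneg.1 (posSemidef_conjTranspose_mul_self X)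
  set E : ℝ → Matrix κ κ ℝ := fun t => cfc (invSqrtSlope t) (Xᵀ * X)
  have hE : Tendsto E (𝓝[>] 0) (𝓝 0) :=
    tendsto_nhdsWithin_of_tendsto_nhds (tendsto_cfc_invSqrtSlope hspec)
  have hEsymm (t : ℝ) : (E t)ᵀ = E t := cfc_predicate (invSqrtSlope t) (Xᵀ * X)
  refine ⟨fun t => (fun j => V j + (W j + t • V j) * E t, X + (Z + t • X) * E t),
    (tendsto_pi_nhds.2 fun j => tendsto_add_add_smul_mul _ _ hE).prodMk_nhds
      (tendsto_add_add_smul_mul _ _ hE), fun t => ⟨fun j => ?_, ?_⟩⟩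
  · have hlin : A j * (W j + t • V j) + B j * (Z + t • X) =
        (A j * W j + B j * Z) + t • (A j * V j + B j * X) := by
      simp only [Matrix.mul_add, Matrix.mul_smul]
      module
    have hVj : A j * V j + B j * X = 0 := congrFun hV j
    change A j * (W j + t • _) + B j * (Z + t • _) = 0
    rw [add_smul_retraction, add_smul_retraction, ← Matrix.mul_assoc, ← Matrix.mul_assoc,
      ← Matrix.add_mul, hlin, hW, hVj, smul_zero, add_zero, Matrix.zero_mul]
  · change (Z + t • _)ᵀ * (Z + t • _) = 1
    rw [add_smul_retraction, transpose_mul, Matrix.mul_assoc, ← Matrix.mul_assoc _ _ (1 + t • E t),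
      transpose_mul_self_add_smul hZ hX, transpose_add, transpose_one, transpose_smul, hEsymm,
      ← Matrix.mul_assoc]
    exact one_add_smul_cfc_invSqrtSlope_conj hsa hspec t

variable [Fintype ι] [Fintype κ] [∀ j, Fintype (ρ j)]

lemma sum_frobInner_gccaLinearization (A : ∀ j, Matrix (ρ j) (ν j) ℝ)
    (B : ∀ j, Matrix (ρ j) μ ℝ) (Z : Matrix μ κ ℝ) (Λ : ∀ j, Matrix (ρ j) κ ℝ) (S : Matrix κ κ ℝ)
    (d : (∀ j, Matrix (ν j) κ ℝ) × Matrix μ κ ℝ) :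
    ∑ j, frobInner (Λ j) ((gccaLinearization A B Z d).1 j) +
        frobInner S (gccaLinearization A B Z d).2 =
      ∑ j, frobInner ((A j)ᵀ * Λ j) (d.1 j) +
        frobInner (∑ j, (B j)ᵀ * Λ j + Z * (S + Sᵀ)) d.2 := by
  have hS : frobInner S (d.2ᵀ * Z) = frobInner (Z * Sᵀ) d.2 := by
    rw [← transpose_transpose (d.2ᵀ * Z), frobInner_transpose_right, transpose_mul,
      transpose_transpose, frobInner_mul_right, transpose_transpose]
  simp only [gccaLinearization, LinearMap.coe_mk, AddHom.coe_mk, frobInner_add_left,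
    frobInner_add_right, Finset.sum_add_distrib, frobInner_mul_right, frobInner_sum_left,
    Matrix.mul_add, hS, transpose_transpose, add_assoc]

theorem sparse_gcca_kkt_general [DecidableEq κ] {A : ∀ j, Matrix (ρ j) (ν j) ℝ}
    {B : ∀ j, Matrix (ρ j) μ ℝ} {f : ∀ j, Matrix (ν j) κ ℝ → ℝ}
    (hf : ∀ j, ConvexOn ℝ Set.univ (f j)) {W : ∀ j, Matrix (ν j) κ ℝ} {Z : Matrix μ κ ℝ}
    (hfeas : (W, Z) ∈ gccaFeasible A B)
    (hmin : IsLocalMinOn (fun p => ∑ j, f j (p.1 j)) (gccaFeasible A B) (W, Z)) :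
    ∃ (Λ₁ : ∀ j, Matrix (ρ j) κ ℝ) (Λ₂ : Matrix κ κ ℝ), Λ₂.IsSymm ∧
      (∀ j, (A j)ᵀ * Λ₁ j ∈ subdiff (f j) (W j)) ∧ ∑ j, (B j)ᵀ * Λ₁ j + Z * Λ₂ = 0 := by
  set F : (∀ j, Matrix (ν j) κ ℝ) × Matrix μ κ ℝ → ℝ := fun p => ∑ j, f j (p.1 j)
  have hF : ConvexOn ℝ Set.univ F := convexOn_sum convex_univ fun j _ =>
    (hf j).comp_linearMap
      ((LinearMap.proj (φ := fun j => Matrix (ν j) κ ℝ) j).comp (LinearMap.fst ℝ _ (Matrix μ κ ℝ)))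
  have hFcont : Continuous F := continuous_of_convexOn_univ hF
  have htangent : ∀ d ∈ LinearMap.ker (gccaLinearization A B Z), F (W, Z) ≤ F ((W, Z) + d) := by
    intro d hd
    obtain ⟨v, hv, hvC⟩ := exists_tendsto_feasible_of_mem_ker hfeas hd
    exact le_add_of_isLocalMinOn_of_tendsto hF hFcont hmin hv (.of_forall hvC)
  obtain ⟨φ, hφ⟩ := exists_dual_comp_subgradient hF hFcont _ htangent
  obtain ⟨Λ, S, hΛ⟩ := exists_eq_sum_frobInner_add φ
  set N := ∑ j, (B j)ᵀ * Λ j + Z * (S + Sᵀ)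
  have hsub (V : ∀ j, Matrix (ν j) κ ℝ) (X : Matrix μ κ ℝ) :
      ∑ j, f j (W j) + (∑ j, frobInner ((A j)ᵀ * Λ j) (V j - W j) + frobInner N (X - Z)) ≤
        ∑ j, f j (V j) := by
    have := hφ (V, X)
    rwa [hΛ, sum_frobInner_gccaLinearization] at this
  refine ⟨Λ, S + Sᵀ, isSymm_add_transpose_self S, mem_subdiff_of_sum_le fun V => ?_,
    eq_zero_of_frobInner_self_nonpos ?_⟩
  · simpa [frobInner_zero_right] using hsub V Z
  · simpa [frobInner_zero_right] using hsub W (Z + N)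

lemma eventually_sum_frobSq_sub_lt (W : ∀ j, Matrix (ν j) κ ℝ) (Z : Matrix μ κ ℝ) {ε : ℝ}
    (hε : 0 < ε) : ∀ᶠ p in 𝓝 (W, Z), ∑ j, frobSq (p.1 j - W j) + frobSq (p.2 - Z) < ε := by
  have hcont : Continuous fun p : (∀ j, Matrix (ν j) κ ℝ) × Matrix μ κ ℝ =>
      ∑ j, frobSq (p.1 j - W j) + frobSq (p.2 - Z) := by
    have := continuous_frobSq (α := μ) (β := κ)
    have (j : ι) := continuous_frobSq (α := ν j) (β := κ)
    fun_prop
  exact hcont.continuousAt.eventually_lt continuousAt_const (by simpa [frobSq] using hε)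

end GCCA

/-- Lemma 1 of the paper, first-order optimality / KKT conditions.
If `(W*, Z*)` is a local minimizer of `min ∑_j ‖W_j‖₁` subject to
`A_j W_j + B_j Z = 0` for all `j` and `Zᵀ Z = I`, then there exist Lagrange
multipliers `Λ₁ⱼ`, `Λ₂` satisfying the KKT conditions. -/
theorem sparse_gcca_kkt (J ℓ m : ℕ) (n r : Fin J → ℕ)
    (A : ∀ j, Matrix (Fin (r j)) (Fin (n j)) ℝ)
    (B : ∀ j, Matrix (Fin (r j)) (Fin m) ℝ)
    (Wstar : ∀ j, Matrix (Fin (n j)) (Fin ℓ) ℝ)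
    (Zstar : Matrix (Fin m) (Fin ℓ) ℝ)
    (hfeasW : ∀ j, A j * Wstar j + B j * Zstar = 0)
    (hfeasZ : Zstarᵀ * Zstar = 1)
    (hlocal : ∃ ε > (0 : ℝ),
      ∀ (W : ∀ j, Matrix (Fin (n j)) (Fin ℓ) ℝ) (Z : Matrix (Fin m) (Fin ℓ) ℝ),
        (∀ j, A j * W j + B j * Z = 0) → Zᵀ * Z = 1 →
        (∑ j, frobSq (W j - Wstar j)) + frobSq (Z - Zstar) < ε →
        (∑ j, l1 (Wstar j)) ≤ ∑ j, l1 (W j)) :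
    ∃ (Λ₁ : ∀ j, Matrix (Fin (r j)) (Fin ℓ) ℝ) (Λ₂ : Matrix (Fin ℓ) (Fin ℓ) ℝ),
      (∀ j, (A j)ᵀ * Λ₁ j ∈ subdiff l1 (Wstar j)) ∧
      (∑ j, (B j)ᵀ * Λ₁ j) + Zstar * Λ₂ = 0 ∧
      (∀ j, A j * Wstar j + B j * Zstar = 0) ∧
      Zstarᵀ * Zstar = 1 := by
  obtain ⟨ε, hε, hle⟩ := hlocal
  have hmin : IsLocalMinOn (fun p => ∑ j, l1 (p.1 j)) (gccaFeasible A B) (Wstar, Zstar) := by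
    filter_upwards [self_mem_nhdsWithin,
      mem_nhdsWithin_of_mem_nhds (eventually_sum_frobSq_sub_lt Wstar Zstar hε)] with p hp hclose
    exact hle p.1 p.2 hp.1 hp.2 hclose
  obtain ⟨Λ₁, Λ₂, -, hsub, hstat⟩ :=
    sparse_gcca_kkt_general (fun _ => convexOn_l1) ⟨hfeasW, hfeasZ⟩ hmin
  exact ⟨Λ₁, Λ₂, hsub, hstat, hfeasW, hfeasZ⟩
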